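/- There exists a constant C > 0 such that for every graph G on n vertices with average degree d ≥ 2, there is a subgraph G₁ ⊆ G with average degree at most C·(log d)^420 and a collection 𝒫 of at most C·n paths in G that strongly separates the set of edges of G that are not edges of G₁. -/

import Mathlib

/-!
The proof gives more than is claimed: `30 n` paths strongly separate *all* edges of `G`, so `G₁ = ⊥`
works and the bound on its average degree is trivial.

* Pósa rotations (`posa`). Fix a longest path `l₀` and let `S` be the set of its possible starting
  vertices after rotations that keep the other end fixed. Every neighbour of `S` outside `S` is
  adjacent along `l₀` to a vertex of `S`. Hence `S` together with its neighbourhood is contained in a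
  set `W` of at most `3|S|` vertices, all of them on the path `l₀`.
* Zigzags (`zigzag`). Given pairwise nested chords `a₁ < a₂ < ⋯ < b₂ < b₁` of a path, the two walks
  `a₁ b₁ → b₂ a₂ → a₃ b₃ ⋯` and `b₁ a₁ → a₂ b₂ → b₃ a₃ ⋯`, whose arrows run along the path, are paths
  that use all of the chords, and they share no edge except chords.
* Two foliations (`stage`). Rank the vertices of `W` along the path. For `κ = 1, 2`, the chords `ab`
  with `a` before `b` and a given value of `rank a + κ * rank b` are pairwise nested, and there are at
  most `(κ + 1)|W|` such values. Two distinct chords differ in at least one of the two values, so the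
  zigzags of all classes, `10|W|` paths altogether, separate every edge inside `W` from every other
  edge of the graph.

Applying this to `W`, and then recursively to the graph without the edges meeting `S`, costs `30|S|`
paths at each step, hence at most `30 n` in total (`separate`). Paths of later steps avoid the edges
meeting `S`, so it is convenient to separate each edge from every other element of `Sym2 V`, edge or
not.
-/

namespace PathSep

variable {V : Type*}

/-! ### Paths as lists of vertices -/

/-- The list of edges traversed by a list of vertices. Throughout, a path of `G` is encoded as a
duplicate-free list of vertices that is a chain for `G.Adj`; the empty list is allowed. -/
def ed : List V → List (Sym2 V)
  | [] => []
  | [_] => []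
  | a :: b :: t => s(a, b) :: ed (b :: t)

lemma mem_ed_cons {a : V} {l : List V} {e : Sym2 V} :
    e ∈ ed (a :: l) ↔ (∃ y ∈ l.head?, e = s(a, y)) ∨ e ∈ ed l := by
  cases l <;> simp [ed]

lemma mem_ed_append {L M : List V} {e : Sym2 V} :
    e ∈ ed (L ++ M) ↔
      e ∈ ed L ∨ e ∈ ed M ∨ ∃ x ∈ L.getLast?, ∃ y ∈ M.head?, e = s(x, y) := by
  induction L with
  | nil => simp [ed]
  | cons a t ih =>
    rw [List.cons_append, mem_ed_cons, ih, mem_ed_cons]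
    cases t with
    | nil => simp [ed, or_comm]
    | cons b t => simp [List.getLast?_cons_cons, or_assoc]

lemma mem_ed_reverse {l : List V} {e : Sym2 V} : e ∈ ed l.reverse ↔ e ∈ ed l := by
  induction l with
  | nil => simp
  | cons a t ih =>
    rw [List.reverse_cons, mem_ed_append, ih, mem_ed_cons (l := t)]
    simp [ed, Sym2.eq_swap, or_comm]

lemma mem_of_mem_ed {l : List V} {e : Sym2 V} (h : e ∈ ed l) : ∀ x ∈ e, x ∈ l := by
  induction l with
  | nil => simp [ed] at h
  | cons a t ih =>
    rw [mem_ed_cons] at h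
    rcases h with ⟨y, hy, rfl⟩ | h
    · intro x hx
      rw [Sym2.mem_iff] at hx
      rcases hx with rfl | rfl
      · simp
      · exact List.mem_cons_of_mem _ (List.mem_of_mem_head? hy)
    · intro x hx
      exact List.mem_cons_of_mem _ (ih h x hx)

lemma edges_ofSupport {G : SimpleGraph V} {l : List V} (hne : l ≠ [])
    (hc : l.IsChain G.Adj) : (SimpleGraph.Walk.ofSupport l hne hc).edges = ed l := by
  rw [SimpleGraph.Walk.edges_eq_zipWith_support, SimpleGraph.Walk.support_ofSupport]
  clear hc
  induction l with
  | nil => simp at hne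
  | cons a t ih =>
    cases t with
    | nil => simp [ed]
    | cons b t => simpa [ed] using ih

lemma exists_walks {G : SimpleGraph V} (Ps : List (List V))
    (h : ∀ Q ∈ Ps, Q.IsChain G.Adj ∧ Q.Nodup) :
    ∃ Ws : List ((u : V) × (v : V) × G.Walk u v), (∀ p ∈ Ws, p.2.2.IsPath) ∧
      Ws.length ≤ Ps.length ∧
      ∀ Q ∈ Ps, Q ≠ [] → ∃ p ∈ Ws, p.2.2.edges = ed Q := by
  induction Ps with
  | nil => exact ⟨[], by simp⟩
  | cons Q Ps ih =>
    obtain ⟨Ws, h1, h2, h3⟩ := ih fun Q hQ => h Q (List.mem_cons_of_mem _ hQ)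
    by_cases hQ : Q = []
    · refine ⟨Ws, h1, by simp; omega, fun R hR hne => ?_⟩
      rcases List.mem_cons.1 hR with rfl | hR
      · exact absurd hQ hne
      · exact h3 R hR hne
    · have hc := (h Q (by simp)).1
      refine ⟨⟨_, _, SimpleGraph.Walk.ofSupport Q hQ hc⟩ :: Ws, ?_, by simpa using h2, ?_⟩
      · intro p hp
        rcases List.mem_cons.1 hp with rfl | hp
        · refine SimpleGraph.Walk.IsPath.mk' ?_
          rw [SimpleGraph.Walk.support_ofSupport]
          exact (h Q (by simp)).2
        · exact h1 p hp
      · intro R hR hne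
        rcases List.mem_cons.1 hR with rfl | hR
        · exact ⟨_, List.mem_cons_self, edges_ofSupport hQ hc⟩
        · obtain ⟨p, hp, hp'⟩ := h3 R hR hne
          exact ⟨p, List.mem_cons_of_mem _ hp, hp'⟩

/-- On a path, the neighbours of `u` along the path are among two vertices `f u`, `g u`. That the
first vertex needs only `f` makes the induction go through. -/
lemma exists_neighbor_funs [DecidableEq V] (l : List V) (hl : l.Nodup) :
    ∃ f g : V → V, ∀ u v, s(u, v) ∈ ed l → v = f u ∨ (v = g u ∧ u ∉ l.head?) := by
  induction l with
  | nil => exact ⟨id, id, by simp [ed]⟩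
  | cons a t ih =>
    obtain ⟨f, g, hfg⟩ := ih hl.of_cons
    cases t with
    | nil => exact ⟨id, id, by simp [ed]⟩
    | cons b t =>
      refine ⟨Function.update f a b, Function.update g b a, fun u v h => ?_⟩
      have hat : a ∉ b :: t := (List.nodup_cons.1 hl).1
      have hab : a ≠ b := fun h => hat (by simp [h])
      rw [mem_ed_cons] at h
      rcases h with ⟨y, hy, h⟩ | h
      · have hy : y = b := by simpa using hy.symm
        subst hy
        rcases Sym2.eq_iff.1 h with ⟨rfl, rfl⟩ | ⟨rfl, rfl⟩
        · simp
        · right; simpa using hab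
      · have hua : u ≠ a := by
          rintro rfl
          exact hat (mem_of_mem_ed h u (by simp))
        rcases hfg u v h with h | ⟨h, h'⟩
        · left; simpa [hua] using h
        · right
          have hub : u ≠ b := by rintro rfl; simp at h'
          refine ⟨by simpa [hub] using h, by simpa using hua.symm⟩

/-! ### Pósa rotations -/

/-- `Rot G l₀ l`: the path `l` arises from `l₀` by a sequence of Pósa rotations at the head. If the
head `x` is adjacent to a later vertex `z`, a rotation reverses the part before `z`, which removes
the path edge entering `z`, adds `xz`, and makes the predecessor of `z` the new head. -/
inductive Rot (G : SimpleGraph V) (l₀ : List V) : List V → Prop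
  | refl : Rot G l₀ l₀
  | step (L M : List V) (x z : V) : Rot G l₀ (L ++ z :: M) → x ∈ L.head? → G.Adj x z →
      Rot G l₀ (L.reverse ++ z :: M)

lemma Rot.chain_perm {G : SimpleGraph V} {l₀ l : List V} (h : Rot G l₀ l)
    (h₀ : l₀.IsChain G.Adj) : l.IsChain G.Adj ∧ l.Perm l₀ := by
  induction h with
  | refl => exact ⟨h₀, List.Perm.refl _⟩
  | step L M x z _ hx hxz ih =>
    obtain ⟨hc, hp⟩ := ih
    refine ⟨?_, (List.Perm.append_right _ (List.reverse_perm L)).trans hp⟩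
    rw [List.isChain_append] at hc ⊢
    refine ⟨?_, hc.2.1, ?_⟩
    · rw [List.isChain_reverse]
      exact hc.1.imp fun a b h => h.symm
    · intro a ha b hb
      rw [List.getLast?_reverse] at ha
      have : a = x := Option.mem_unique ha hx
      have : z = b := by simpa using hb
      subst_vars
      exact hxz

/-- When a rotation at `z` is possible, the predecessor of `z` is the head of some rotated path. -/
lemma Rot.exists_pred {G : SimpleGraph V} {l₀ L M : List V} {x z : V}
    (h : Rot G l₀ (L ++ z :: M)) (hx : x ∈ L.head?) (hxz : G.Adj x z) :
    ∃ w, (∃ l, Rot G l₀ l ∧ w ∈ l.head?) ∧ s(w, z) ∈ ed (L ++ z :: M) := by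
  have hL : L ≠ [] := by rintro rfl; simp at hx
  refine ⟨L.getLast hL, ⟨_, Rot.step L M x z h hx hxz, ?_⟩, ?_⟩
  · simp [List.head?_append, List.getLast?_eq_getLast_of_ne_nil hL]
  · rw [mem_ed_append]
    exact Or.inr (Or.inr ⟨_, List.getLast_mem_getLast? hL, z, by simp, rfl⟩)

/-- If neither `v` nor any of its neighbours along `l₀` is ever a head, then rotations create no new
path edges at `v`. -/
lemma Rot.edge_old {G : SimpleGraph V} {l₀ : List V} {v : V}
    (hv : ¬ ∃ l, Rot G l₀ l ∧ v ∈ l.head?)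
    (hv' : ∀ w, (∃ l, Rot G l₀ l ∧ w ∈ l.head?) → s(w, v) ∉ ed l₀)
    {l : List V} (h : Rot G l₀ l) : ∀ u, s(u, v) ∈ ed l → s(u, v) ∈ ed l₀ := by
  induction h with
  | refl => exact fun u h => h
  | step L M x z hr hx hxz ih =>
    intro u hu
    rw [mem_ed_append, mem_ed_reverse] at hu
    rcases hu with hu | hu | ⟨a, ha, b, hb, hu⟩
    · exact ih u (mem_ed_append.2 (Or.inl hu))
    · exact ih u (mem_ed_append.2 (Or.inr (Or.inl hu)))
    · rw [List.getLast?_reverse] at ha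
      have h1 : a = x := Option.mem_unique ha hx
      have h2 : z = b := by simpa using hb
      subst h1 h2
      exfalso
      -- The new edge `xz` cannot meet `v`: `z = v` would make the predecessor of `v`, a neighbour
      -- along `l₀`, a head, while `x = v` is itself a head.
      rcases Sym2.eq_iff.1 hu with ⟨-, rfl⟩ | ⟨-, rfl⟩
      · obtain ⟨w, hw, hwz⟩ := hr.exists_pred hx hxz
        exact hv' w hw (ih w hwz)
      · refine hv ⟨_, hr, ?_⟩
        cases L with
        | nil => simp at hx
        | cons => simpa using hx

lemma exists_longest (G : SimpleGraph V) (A : Finset V) (hA : A.Nonempty) :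
    ∃ l : List V, (l.IsChain G.Adj ∧ l.Nodup ∧ (∀ x ∈ l, x ∈ A)) ∧ l ≠ [] ∧
      ∀ l' : List V, l'.IsChain G.Adj → l'.Nodup → (∀ x ∈ l', x ∈ A) →
        l'.length ≤ l.length := by
  classical
  have hlen : ∀ l : List V, l.Nodup → (∀ x ∈ l, x ∈ A) → l.length ≤ A.card := by
    intro l hl h
    rw [← List.toFinset_card_of_nodup hl]
    exact Finset.card_le_card fun x hx => h x (by simpa using hx)
  obtain ⟨a, ha⟩ := hA
  obtain ⟨l, hl, hmin⟩ := (measure fun l : List V => A.card - l.length).wf.has_min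
    {l : List V | l.IsChain G.Adj ∧ l.Nodup ∧ (∀ x ∈ l, x ∈ A)} ⟨[a], by simpa using ha⟩
  have hmax : ∀ l' : List V, l'.IsChain G.Adj → l'.Nodup → (∀ x ∈ l', x ∈ A) →
        l'.length ≤ l.length := by
    intro l' h1 h2 h3
    have := hmin l' ⟨h1, h2, h3⟩
    change ¬ (A.card - l'.length < A.card - l.length) at this
    have := hlen l' h2 h3
    have := hlen l hl.2.1 hl.2.2
    omega
  refine ⟨l, hl, ?_, hmax⟩
  rintro rfl
  have := hmax [a] (by simp) (by simp) (by simpa using ha)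
  simp at this

/-- Pósa's lemma: some nonempty `S` has its closed neighbourhood inside a set `W` of at most `3|S|`
vertices that all lie on a single path. -/
lemma posa (G : SimpleGraph V) (A : Finset V) (hA : A.Nonempty)
    (hG : ∀ a b, G.Adj a b → a ∈ A) :
    ∃ (l : List V) (S W : Finset V), l.IsChain G.Adj ∧ l.Nodup ∧ S.Nonempty ∧ S ⊆ A ∧
      (∀ w ∈ W, w ∈ l) ∧ W.card ≤ 3 * S.card ∧ S ⊆ W ∧
      ∀ s ∈ S, ∀ v, G.Adj s v → v ∈ W := by
  classical
  obtain ⟨l₀, ⟨hc, hn, hlA⟩, hne, hmax⟩ := exists_longest G A hA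
  obtain ⟨f, g, hfg⟩ := exists_neighbor_funs l₀ hn
  set S : Finset V := l₀.toFinset.filter fun v => ∃ l, Rot G l₀ l ∧ v ∈ l.head? with hS
  have hmemS : ∀ v, v ∈ S ↔ ∃ l, Rot G l₀ l ∧ v ∈ l.head? := by
    intro v
    rw [hS, Finset.mem_filter, List.mem_toFinset]
    refine ⟨fun h => h.2, fun h => ⟨?_, h⟩⟩
    obtain ⟨l, hl, hv⟩ := h
    exact (hl.chain_perm hc).2.mem_iff.1 (List.mem_of_mem_head? hv)
  refine ⟨l₀, S, l₀.toFinset.filter (· ∈ S ∪ S.image f ∪ S.image g), hc, hn, ?_, ?_, ?_, ?_, ?_, ?_⟩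
  · exact ⟨l₀.head hne, (hmemS _).2 ⟨l₀, Rot.refl, List.head_mem_head? hne⟩⟩
  · intro v hv
    exact hlA v (by simpa using (Finset.mem_filter.1 hv).1)
  · intro w hw
    simpa using (Finset.mem_filter.1 hw).1
  · calc _ ≤ (S ∪ S.image f ∪ S.image g).card :=
          Finset.card_le_card fun x hx => (Finset.mem_filter.1 hx).2
      _ ≤ _ := by
          have h1 := Finset.card_union_le (S ∪ S.image f) (S.image g)
          have h2 := Finset.card_union_le S (S.image f)
          have h3 : (S.image f).card ≤ S.card := Finset.card_image_le
          have h4 : (S.image g).card ≤ S.card := Finset.card_image_le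
          omega
  · intro v hv
    refine Finset.mem_filter.2 ⟨(Finset.mem_filter.1 hv).1, by simp [hv]⟩
  · intro s hs v hsv
    obtain ⟨l, hl, hsl⟩ := (hmemS s).1 hs
    obtain ⟨hlc, hlp⟩ := hl.chain_perm hc
    have hvl : v ∈ l := by
      by_contra hvl
      have := hmax (v :: l) ?_ (List.nodup_cons.2 ⟨hvl, hlp.nodup_iff.2 hn⟩) ?_
      · have := hlp.length_eq
        simp at *
        omega
      · rw [List.isChain_cons]
        refine ⟨fun y hy => ?_, hlc⟩
        rw [Option.mem_unique hy hsl]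
        exact hsv.symm
      · intro x hx
        rcases List.mem_cons.1 hx with rfl | hx
        · exact hG _ _ hsv.symm
        · exact hlA _ (hlp.mem_iff.1 hx)
    have hvl₀ : v ∈ l₀ := hlp.mem_iff.1 hvl
    refine Finset.mem_filter.2 ⟨by simpa using hvl₀, ?_⟩
    by_contra hv
    simp only [Finset.mem_union, Finset.mem_image, not_or, not_exists, not_and] at hv
    obtain ⟨⟨hv1, hv2⟩, hv3⟩ := hv
    rw [hmemS] at hv1
    have hv' : ∀ w, (∃ l, Rot G l₀ l ∧ w ∈ l.head?) → s(w, v) ∉ ed l₀ := by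
      intro w hw hwv
      rcases hfg w v hwv with h | ⟨h, -⟩
      · exact hv2 w ((hmemS w).2 hw) h.symm
      · exact hv3 w ((hmemS w).2 hw) h.symm
    -- Rotating at `v` makes the predecessor of `v` a head, and that vertex is a neighbour of `v`
    -- already along `l₀`.
    obtain ⟨L, M, rfl⟩ := List.append_of_mem hvl
    have hsL : s ∈ L.head? := by
      cases L with
      | nil => exact absurd ⟨_, hl, by simp⟩ hv1
      | cons => simpa using hsl
    obtain ⟨w, hw, hwv⟩ := hl.exists_pred hsL hsv
    exact hv' w hw (hl.edge_old hv1 hv' w hwv)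

/-! ### Zigzag paths through nested chords -/

set_option maxHeartbeats 1000000 in
/-- A family `N` of pairwise nested chords of a path `l` is covered by each of two paths that have no
common edge outside `N`. The first starts at the head of `l` and the second at its last vertex (unless
empty), so that both can be extended when an outer chord is added. The position function `φ`
increases along `l`. -/
lemma zigzag (G : SimpleGraph V) (φ : V → ℕ) (k : ℕ) :
    ∀ (N : Finset (V × V)) (l : List V), N.card = k → l.IsChain G.Adj →
      l.Pairwise (fun x y => φ x < φ y) →
      (∀ p ∈ N, p.1 ∈ l ∧ p.2 ∈ l ∧ φ p.1 < φ p.2 ∧ G.Adj p.1 p.2) →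
      (∀ p ∈ N, ∀ q ∈ N, p ≠ q →
        (φ p.1 < φ q.1 ∧ φ q.2 < φ p.2) ∨ (φ q.1 < φ p.1 ∧ φ p.2 < φ q.2)) →
      ∃ Q₁ Q₂ : List V,
        (Q₁.IsChain G.Adj ∧ Q₁.Nodup ∧ (∀ x ∈ Q₁, x ∈ l) ∧ ∀ x ∈ Q₁.head?, x ∈ l.head?) ∧
        (Q₂.IsChain G.Adj ∧ Q₂.Nodup ∧ (∀ x ∈ Q₂, x ∈ l) ∧ ∀ x ∈ Q₂.head?, x ∈ l.getLast?) ∧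
        (∀ p ∈ N, s(p.1, p.2) ∈ ed Q₁ ∧ s(p.1, p.2) ∈ ed Q₂) ∧
        ∀ e ∈ ed Q₁, e ∈ ed Q₂ → ∃ p ∈ N, e = s(p.1, p.2) := by
  classical
  induction k with
  | zero =>
    intro N l hN _ _ _ _
    rw [Finset.card_eq_zero] at hN
    subst hN
    exact ⟨[], [], by simp [ed]⟩
  | succ k ih =>
    intro N l hN hc hφ hmem hnest
    -- Peel off the outermost chord `ab`, splitting `l` as `L, a, M, b, R`.
    obtain ⟨⟨a, b⟩, hab, hmin⟩ := N.exists_min_image (fun p => φ p.1)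
      (Finset.card_pos.1 (by omega))
    obtain ⟨hal, hbl, hlt, hadj⟩ := hmem _ hab
    simp only at hal hbl hlt hadj hmin
    have hin : ∀ q ∈ N.erase (a, b), φ a < φ q.1 ∧ φ q.2 < φ b := by
      intro q hq
      obtain ⟨hq1, hq2⟩ := Finset.mem_erase.1 hq
      have := hmin q hq2
      rcases hnest _ hab q hq2 hq1.symm with h | h
      · exact h
      · simp only at h; omega
    have hnd : l.Nodup := hφ.imp fun h => by rintro rfl; exact lt_irrefl _ h
    obtain ⟨L, T, rfl⟩ := List.append_of_mem hal
    have hbT : b ∈ T := by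
      rw [List.pairwise_append] at hφ
      rcases List.mem_append.1 hbl with h | h
      · have := hφ.2.2 b h a (by simp); omega
      · rcases List.mem_cons.1 h with rfl | h
        · omega
        · exact h
    obtain ⟨M, R, rfl⟩ := List.append_of_mem hbT
    have hM : ∀ x ∈ L ++ a :: (M ++ b :: R), φ a < φ x → φ x < φ b → x ∈ M := by
      intro x hx h1 h2
      simp only [List.pairwise_append, List.pairwise_cons, List.mem_append, List.mem_cons] at hφ hx
      rcases hx with hx | rfl | hx | rfl | hx
      · have := hφ.2.2 x hx a (by simp); omega
      · omega
      · exact hx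
      · omega
      · have := hφ.2.1.2.2.1.1 x hx; omega
    have hc' := hc
    rw [List.isChain_append, List.isChain_cons, List.isChain_append, List.isChain_cons] at hc'
    obtain ⟨hcL, ⟨haM, hcM, ⟨hbR, hcR⟩, hMb⟩, hLa⟩ := hc'
    obtain ⟨Q₁, Q₂, ⟨h1c, h1n, h1m, h1h⟩, ⟨h2c, h2n, h2m, h2h⟩, hcov, hcom⟩ :=
      ih (N.erase (a, b)) M (by rw [Finset.card_erase_of_mem hab]; omega) hcM
        (by
          rw [List.pairwise_append, List.pairwise_cons, List.pairwise_append] at hφ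
          exact hφ.2.1.2.1)
        (by
          intro p hp
          obtain ⟨h1, h2, h3, h4⟩ := hmem p (Finset.mem_of_mem_erase hp)
          obtain ⟨h5, h6⟩ := hin p hp
          exact ⟨hM _ h1 h5 (by omega), hM _ h2 (by omega) h6, h3, h4⟩)
        (fun p hp q hq => hnest p (Finset.mem_of_mem_erase hp) q (Finset.mem_of_mem_erase hq))
    have haM' : ∀ x ∈ Q₁.head?, G.Adj a x := fun x hx => by
      have := h1h x hx
      exact haM x (by rw [List.head?_append]; simp [Option.mem_def.1 this])
    have hbM' : ∀ x ∈ Q₂.head?, G.Adj b x := fun x hx => (hMb x (h2h x hx) b (by simp)).symm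
    have hnd' := hnd
    simp only [List.nodup_append, List.nodup_cons, List.mem_append, List.mem_cons, not_or] at hnd'
    refine ⟨L ++ a :: b :: Q₂, R.reverse ++ b :: a :: Q₁, ⟨?_, ?_, ?_, ?_⟩, ⟨?_, ?_, ?_, ?_⟩, ?_, ?_⟩
    · rw [List.isChain_append, List.isChain_cons, List.isChain_cons]
      exact ⟨hcL, ⟨by simpa using hadj, hbM', h2c⟩, by simpa using hLa⟩
    · simp only [List.nodup_append, List.nodup_cons, List.mem_cons, not_or]
      grind
    · intro x hx
      simp only [List.mem_append, List.mem_cons] at hx ⊢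
      grind
    · intro x hx
      cases L <;> simpa using hx
    · rw [List.isChain_append, List.isChain_cons, List.isChain_cons, List.isChain_reverse]
      refine ⟨hcR.imp fun a b h => h.symm, ⟨by simpa using hadj.symm, haM', h1c⟩, ?_⟩
      intro x hx y hy
      rw [List.getLast?_reverse] at hx
      have : b = y := by simpa using hy
      exact this ▸ (hbR x hx).symm
    · simp only [List.nodup_append, List.nodup_cons, List.mem_cons, not_or, List.nodup_reverse,
        List.mem_reverse]
      grind
    · intro x hx
      simp only [List.mem_append, List.mem_cons, List.mem_reverse] at hx ⊢
      grind
    · intro x hx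
      rw [← List.head?_reverse]
      simp only [List.reverse_append, List.reverse_cons, List.append_assoc]
      cases h : R.reverse <;> rw [h] at hx <;> simpa using hx
    · intro p hp
      by_cases hpab : p = (a, b)
      · subst hpab
        constructor
        · simp [mem_ed_append, mem_ed_cons]
        · simp [mem_ed_append, mem_ed_cons]
      · obtain ⟨h1, h2⟩ := hcov p (Finset.mem_erase.2 ⟨hpab, hp⟩)
        exact ⟨by simp [mem_ed_append, mem_ed_cons, h2], by simp [mem_ed_append, mem_ed_cons, h1]⟩
    · intro e he1 he2
      -- The edges of the first path lie in `L ∪ {a}`, join `b` to `M`, or belong to `Q₂`; those of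
      -- the second lie in `R ∪ {b}`, join `a` to `M`, or belong to `Q₁`. Apart from `ab` itself and
      -- common edges of `Q₁` and `Q₂`, these types are incompatible.
      have e1 : e = s(a, b) ∨ (∀ x ∈ e, x ∈ L ∨ x = a) ∨ (∃ x ∈ M, e = s(b, x)) ∨
          e ∈ ed Q₂ := by
        rw [mem_ed_append, mem_ed_cons, mem_ed_cons] at he1
        rcases he1 with h | (⟨y, hy, h⟩ | ⟨y, hy, h⟩ | h) | ⟨x, hx, y, hy, h⟩
        · exact Or.inr (Or.inl fun x hx => Or.inl (mem_of_mem_ed h x hx))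
        · simp at hy; subst hy; exact Or.inl h
        · exact Or.inr (Or.inr (Or.inl ⟨y, h2m y (List.mem_of_mem_head? hy), h⟩))
        · exact Or.inr (Or.inr (Or.inr h))
        · simp at hy; subst hy
          refine Or.inr (Or.inl fun z hz => ?_)
          rw [h, Sym2.mem_iff] at hz
          rcases hz with rfl | rfl
          · exact Or.inl (List.mem_of_mem_getLast? hx)
          · exact Or.inr rfl
      have e2 : e = s(a, b) ∨ (∀ x ∈ e, x ∈ R ∨ x = b) ∨ (∃ x ∈ M, e = s(a, x)) ∨
          e ∈ ed Q₁ := by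
        rw [mem_ed_append, mem_ed_cons, mem_ed_cons, mem_ed_reverse] at he2
        rcases he2 with h | (⟨y, hy, h⟩ | ⟨y, hy, h⟩ | h) | ⟨x, hx, y, hy, h⟩
        · exact Or.inr (Or.inl fun x hx => Or.inl (mem_of_mem_ed h x hx))
        · simp at hy; subst hy; exact Or.inl (h.trans Sym2.eq_swap)
        · exact Or.inr (Or.inr (Or.inl ⟨y, h1m y (List.mem_of_mem_head? hy), h⟩))
        · exact Or.inr (Or.inr (Or.inr h))
        · simp at hy; subst hy
          refine Or.inr (Or.inl fun z hz => ?_)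
          rw [List.getLast?_reverse] at hx
          rw [h, Sym2.mem_iff] at hz
          rcases hz with rfl | rfl
          · exact Or.inl (List.mem_of_mem_head? hx)
          · exact Or.inr rfl
      have m1 : e ∈ ed Q₁ → ∀ x ∈ e, x ∈ M := fun h x hx => h1m x (mem_of_mem_ed h x hx)
      have m2 : e ∈ ed Q₂ → ∀ x ∈ e, x ∈ M := fun h x hx => h2m x (mem_of_mem_ed h x hx)
      by_cases heab : e = s(a, b)
      · exact ⟨(a, b), hab, heab⟩
      by_cases hboth : e ∈ ed Q₁ ∧ e ∈ ed Q₂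
      · obtain ⟨p, hp, hpe⟩ := hcom e hboth.1 hboth.2
        exact ⟨p, Finset.mem_of_mem_erase hp, hpe⟩
      exfalso
      clear hcom hcov hφ hM hmem hnest hmin hin he1 he2
      induction e with | _ u v =>
      simp only [Sym2.mem_iff, forall_eq_or_imp, forall_eq, Sym2.eq_iff] at *
      grind

/-! ### Separating all edges at a rotation set -/

/-- The zigzag paths of the classes `ρ a + κ * ρ b = s`, for all `s < (κ + 1)|W|`, separate an edge
inside `W` from everything that is not an edge of its class. -/
lemma classes (G : SimpleGraph V) (l : List V) (φ ρ : V → ℕ) (W : Finset V) (κ : ℕ) (hκ : 1 ≤ κ)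
    (hc : l.IsChain G.Adj) (hφ : l.Pairwise (fun x y => φ x < φ y))
    (hφi : ∀ x ∈ l, ∀ y ∈ l, φ x = φ y → x = y)
    (hW : ∀ w ∈ W, w ∈ l) (hρ : ∀ w ∈ W, ρ w < W.card)
    (hφρ : ∀ x ∈ W, ∀ y ∈ W, φ x < φ y → ρ x < ρ y) :
    ∃ Ps : List (List V), Ps.length ≤ 2 * ((κ + 1) * W.card) ∧
      (∀ Q ∈ Ps, Q.IsChain G.Adj ∧ Q.Nodup) ∧
      ∀ a ∈ W, ∀ b ∈ W, φ a < φ b → G.Adj a b → ∀ f : Sym2 V,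
        (∀ c ∈ W, ∀ d ∈ W, φ c < φ d → f = s(c, d) → ρ c + κ * ρ d ≠ ρ a + κ * ρ b) →
        ∃ Q ∈ Ps, s(a, b) ∈ ed Q ∧ f ∉ ed Q := by
  classical
  have hρφ : ∀ x ∈ W, ∀ y ∈ W, ρ x < ρ y → φ x < φ y := by
    intro x hx y hy h
    by_contra h'
    rcases (not_lt.1 h').lt_or_eq with h' | h'
    · have := hφρ y hy x hx h'; omega
    · have := hφi y (hW y hy) x (hW x hx) h'
      subst this; omega
  have key : ∀ s : ℕ, ∃ Q₁ Q₂ : List V, (Q₁.IsChain G.Adj ∧ Q₁.Nodup) ∧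
      (Q₂.IsChain G.Adj ∧ Q₂.Nodup) ∧
      (∀ a ∈ W, ∀ b ∈ W, φ a < φ b → G.Adj a b → ρ a + κ * ρ b = s →
        s(a, b) ∈ ed Q₁ ∧ s(a, b) ∈ ed Q₂) ∧
      ∀ e ∈ ed Q₁, e ∈ ed Q₂ → ∃ c ∈ W, ∃ d ∈ W, φ c < φ d ∧ e = s(c, d) ∧
        ρ c + κ * ρ d = s := by
    intro s
    have hN : ∀ p, p ∈ (W ×ˢ W).filter
        (fun p => φ p.1 < φ p.2 ∧ G.Adj p.1 p.2 ∧ ρ p.1 + κ * ρ p.2 = s) ↔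
        (p.1 ∈ W ∧ p.2 ∈ W) ∧ φ p.1 < φ p.2 ∧ G.Adj p.1 p.2 ∧ ρ p.1 + κ * ρ p.2 = s := by
      intro p
      rw [Finset.mem_filter, Finset.mem_product]
    generalize (W ×ˢ W).filter
        (fun p => φ p.1 < φ p.2 ∧ G.Adj p.1 p.2 ∧ ρ p.1 + κ * ρ p.2 = s) = N at hN
    obtain ⟨Q₁, Q₂, h1, h2, h3, h4⟩ := zigzag G φ _ N l rfl hc hφ
      (by
        intro p hp
        obtain ⟨⟨h1, h2⟩, h3, h4, -⟩ := (hN p).1 hp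
        exact ⟨hW _ h1, hW _ h2, h3, h4⟩)
      (by
        intro p hp q hq hpq
        obtain ⟨⟨p1, p2⟩, p3, p4, p5⟩ := (hN p).1 hp
        obtain ⟨⟨q1, q2⟩, q3, q4, q5⟩ := (hN q).1 hq
        rcases lt_trichotomy (ρ p.2) (ρ q.2) with h | h | h
        · right
          refine ⟨hρφ _ q1 _ p1 ?_, hρφ _ p2 _ q2 h⟩
          nlinarith
        · exfalso
          have h' : ρ p.1 = ρ q.1 := by rw [h] at p5; omega
          have inj : ∀ x ∈ W, ∀ y ∈ W, ρ x = ρ y → x = y := by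
            intro x hx y hy hxy
            apply hφi x (hW x hx) y (hW y hy)
            rcases lt_trichotomy (φ x) (φ y) with h | h | h
            · have := hφρ x hx y hy h; omega
            · exact h
            · have := hφρ y hy x hx h; omega
          exact hpq (Prod.ext (inj _ p1 _ q1 h') (inj _ p2 _ q2 h))
        · left
          refine ⟨hρφ _ p1 _ q1 ?_, hρφ _ q2 _ p2 h⟩
          nlinarith)
    refine ⟨Q₁, Q₂, ⟨h1.1, h1.2.1⟩, ⟨h2.1, h2.2.1⟩, ?_, ?_⟩
    · intro a ha b hb hab hadj hs
      exact h3 (a, b) ((hN _).2 ⟨⟨ha, hb⟩, hab, hadj, hs⟩)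
    · intro e he1 he2
      obtain ⟨p, hp, hpe⟩ := h4 e he1 he2
      obtain ⟨⟨p1, p2⟩, p3, p4, p5⟩ := (hN p).1 hp
      exact ⟨_, p1, _, p2, p3, hpe, p5⟩
  choose Q₁ Q₂ h1 h2 h3 h4 using key
  refine ⟨(List.range ((κ + 1) * W.card)).map Q₁ ++ (List.range ((κ + 1) * W.card)).map Q₂,
    by simp; omega, ?_, ?_⟩
  · intro Q hQ
    simp only [List.mem_append, List.mem_map] at hQ
    rcases hQ with ⟨s, -, rfl⟩ | ⟨s, -, rfl⟩
    · exact h1 s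
    · exact h2 s
  · intro a ha b hb hab hadj f hf
    have hs : ρ a + κ * ρ b < (κ + 1) * W.card := by
      have := hρ a ha
      have := hρ b hb
      nlinarith
    obtain ⟨m1, m2⟩ := h3 _ a ha b hb hab hadj rfl
    by_cases hfQ : f ∈ ed (Q₁ (ρ a + κ * ρ b))
    · refine ⟨Q₂ (ρ a + κ * ρ b), ?_, m2, fun hfQ2 => ?_⟩
      · exact List.mem_append_right _ (List.mem_map_of_mem (List.mem_range.2 hs))
      · obtain ⟨c, hc, d, hd, hcd, hfe, hsum⟩ := h4 _ f hfQ hfQ2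
        exact hf c hc d hd hcd hfe hsum
    · refine ⟨Q₁ (ρ a + κ * ρ b), ?_, m1, hfQ⟩
      exact List.mem_append_left _ (List.mem_map_of_mem (List.mem_range.2 hs))

/-- If `W` lies on a path, then `10|W|` paths separate each edge inside `W` from everything else. -/
lemma stage (G : SimpleGraph V) (l : List V) (W : Finset V)
    (hc : l.IsChain G.Adj) (hn : l.Nodup) (hW : ∀ w ∈ W, w ∈ l) :
    ∃ Ps : List (List V), Ps.length ≤ 10 * W.card ∧
      (∀ Q ∈ Ps, Q.IsChain G.Adj ∧ Q.Nodup) ∧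
      ∀ a ∈ W, ∀ b ∈ W, G.Adj a b → ∀ f : Sym2 V, f ≠ s(a, b) →
        ∃ Q ∈ Ps, s(a, b) ∈ ed Q ∧ f ∉ ed Q := by
  classical
  obtain ⟨φ, hφ, hφi⟩ : ∃ φ : V → ℕ, l.Pairwise (fun x y => φ x < φ y) ∧
      ∀ x ∈ l, ∀ y ∈ l, φ x = φ y → x = y := by
    refine ⟨fun v => l.idxOf v, ?_, fun x hx y hy h => (List.idxOf_inj hx).1 h⟩
    rw [List.pairwise_iff_getElem]
    intro i j hi hj hij
    simpa only [hn.idxOf_getElem] using hij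
  set ρ : V → ℕ := fun w => (W.filter fun u => φ u < φ w).card with hρdef
  have hρ : ∀ w ∈ W, ρ w < W.card := fun w hw =>
    Finset.card_lt_card (Finset.filter_ssubset.2 ⟨w, hw, lt_irrefl _⟩)
  have hφρ : ∀ x ∈ W, ∀ y ∈ W, φ x < φ y → ρ x < ρ y := by
    intro x hx y hy h
    refine Finset.card_lt_card ((Finset.ssubset_iff_of_subset ?_).2 ⟨x, ?_, ?_⟩)
    · intro u hu
      rw [Finset.mem_filter] at hu ⊢
      exact ⟨hu.1, hu.2.trans h⟩
    · simp [hx, h]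
    · simp
  have hρi : ∀ x ∈ W, ∀ y ∈ W, ρ x = ρ y → x = y := by
    intro x hx y hy hxy
    apply hφi x (hW x hx) y (hW y hy)
    rcases lt_trichotomy (φ x) (φ y) with h | h | h
    · have := hφρ x hx y hy h; omega
    · exact h
    · have := hφρ y hy x hx h; omega
  obtain ⟨P1, l1, c1, s1⟩ := classes G l φ ρ W 1 le_rfl hc hφ hφi hW hρ hφρ
  obtain ⟨P2, l2, c2, s2⟩ := classes G l φ ρ W 2 (by norm_num) hc hφ hφi hW hρ hφρ
  refine ⟨P1 ++ P2, by simp; omega, ?_, ?_⟩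
  · intro Q hQ
    rcases List.mem_append.1 hQ with h | h
    · exact c1 Q h
    · exact c2 Q h
  have main : ∀ a ∈ W, ∀ b ∈ W, φ a < φ b → G.Adj a b → ∀ f : Sym2 V, f ≠ s(a, b) →
        ∃ Q ∈ P1 ++ P2, s(a, b) ∈ ed Q ∧ f ∉ ed Q := by
    intro a ha b hb hab hadj f hf
    by_cases hf1 : ∀ c ∈ W, ∀ d ∈ W, φ c < φ d → f = s(c, d) → ρ c + 1 * ρ d ≠ ρ a + 1 * ρ b
    · obtain ⟨Q, hQ, h⟩ := s1 a ha b hb hab hadj f hf1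
      exact ⟨Q, List.mem_append_left _ hQ, h⟩
    · push Not at hf1
      obtain ⟨c, hc, d, hd, hcd, rfl, h1⟩ := hf1
      obtain ⟨Q, hQ, h⟩ := s2 a ha b hb hab hadj s(c, d) (by
        intro c' hc' d' hd' hcd' he h2
        rcases Sym2.eq_iff.1 he with ⟨rfl, rfl⟩ | ⟨rfl, rfl⟩
        · have e1 : c = a := hρi c hc a ha (by omega)
          have e2 : d = b := hρi d hd b hb (by omega)
          exact hf (by rw [e1, e2])
        · omega)
      exact ⟨Q, List.mem_append_right _ hQ, h⟩
  intro a ha b hb hadj f hf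
  rcases lt_trichotomy (φ a) (φ b) with h | h | h
  · exact main a ha b hb h hadj f hf
  · exact absurd (hφi a (hW a ha) b (hW b hb) h) hadj.ne
  · rw [Sym2.eq_swap] at hf ⊢
    exact main b hb a ha h hadj.symm f hf

/-- If all edges of `G` lie inside `A`, then `30|A|` paths strongly separate the edges of `G`. -/
lemma separate (k : ℕ) : ∀ (A : Finset V) (G : SimpleGraph V), A.card = k →
    (∀ a b, G.Adj a b → a ∈ A) →
    ∃ Ps : List (List V), Ps.length ≤ 30 * A.card ∧
      (∀ Q ∈ Ps, Q.IsChain G.Adj ∧ Q.Nodup) ∧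
      ∀ a b, G.Adj a b → ∀ f : Sym2 V, f ≠ s(a, b) →
        ∃ Q ∈ Ps, s(a, b) ∈ ed Q ∧ f ∉ ed Q := by
  classical
  induction k using Nat.strong_induction_on with
  | _ k ih =>
  intro A G hk hG
  rcases A.eq_empty_or_nonempty with rfl | hA
  · exact ⟨[], by simp, by simp, fun a b h => absurd (hG a b h) (by simp)⟩
  obtain ⟨l, S, W, hc, hn, hS, hSA, hWl, hWc, hSW, hSN⟩ := posa G A hA hG
  obtain ⟨P1, l1, c1, s1⟩ := stage G l W hc hn hWl
  -- The recursion continues in the graph without the edges meeting `S`.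
  let G' : SimpleGraph V :=
    { Adj := fun a b => G.Adj a b ∧ a ∉ S ∧ b ∉ S
      symm := ⟨fun a b h => ⟨h.1.symm, h.2.2, h.2.1⟩⟩
      loopless := ⟨fun a h => h.1.ne rfl⟩ }
  have hcard := Finset.card_sdiff_add_card_eq_card hSA
  have hSpos := hS.card_pos
  obtain ⟨P2, l2, c2, s2⟩ := ih (A \ S).card (by omega) (A \ S) G' rfl
    (fun a b h => Finset.mem_sdiff.2 ⟨hG a b h.1, h.2.1⟩)
  refine ⟨P1 ++ P2, by rw [List.length_append]; omega, ?_, ?_⟩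
  · intro Q hQ
    rcases List.mem_append.1 hQ with h | h
    · exact c1 Q h
    · exact ⟨(c2 Q h).1.imp fun a b h => h.1, (c2 Q h).2⟩
  · intro a b hab f hf
    by_cases h : a ∉ S ∧ b ∉ S
    · obtain ⟨Q, hQ, h⟩ := s2 a b ⟨hab, h⟩ f hf
      exact ⟨Q, List.mem_append_right _ hQ, h⟩
    · have hW : a ∈ W ∧ b ∈ W := by
        by_cases ha : a ∈ S
        · exact ⟨hSW ha, hSN a ha b hab⟩
        · have hb : b ∈ S := by tauto
          exact ⟨hSN b hb a hab.symm, hSW hb⟩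
      obtain ⟨Q, hQ, h⟩ := s1 a hW.1 b hW.2 hab f hf
      exact ⟨Q, List.mem_append_left _ hQ, h⟩

end PathSep

/-- There is a constant `C > 0` such that every graph `G` on `n` vertices with average
degree `d = 2e(G)/n ≥ 2` has a subgraph `G₁ ⊆ G` of average degree at most
`C (log d)^420` and a collection of at most `C n` paths strongly separating the edges
of `G` not in `G₁`. -/
theorem one_step_reduction :
    ∃ C : ℝ, 0 < C ∧
      ∀ (V : Type) [Fintype V] (G : SimpleGraph V),
        2 ≤ 2 * (G.edgeSet.ncard : ℝ) / (Fintype.card V : ℝ) →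
        ∃ G₁ : SimpleGraph V, G₁ ≤ G ∧
          (2 * (G₁.edgeSet.ncard : ℝ) / (Fintype.card V : ℝ) ≤
            C * (Real.logb 2 (2 * (G.edgeSet.ncard : ℝ) / (Fintype.card V : ℝ)))^420) ∧
          ∃ Ps : List ((u : V) × (v : V) × G.Walk u v),
            (∀ p ∈ Ps, p.2.2.IsPath) ∧
            ((Ps.length : ℝ) ≤ C * (Fintype.card V : ℝ)) ∧
            (∀ e ∈ G.edgeSet \ G₁.edgeSet, ∀ f ∈ G.edgeSet \ G₁.edgeSet, e ≠ f →
              ∃ p ∈ Ps, e ∈ p.2.2.edges ∧ f ∉ p.2.2.edges) := by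
  refine ⟨30, by norm_num, ?_⟩
  intro V _ G hd
  obtain ⟨Ps, hlen, hP, hsep⟩ :=
    PathSep.separate _ (Finset.univ : Finset V) G rfl (fun _ _ _ => Finset.mem_univ _)
  obtain ⟨Ws, hW1, hW2, hW3⟩ := PathSep.exists_walks Ps hP
  refine ⟨⊥, bot_le, ?_, Ws, hW1, ?_, ?_⟩
  · have : 0 ≤ Real.logb 2 (2 * (G.edgeSet.ncard : ℝ) / (Fintype.card V : ℝ)) :=
      Real.logb_nonneg (by norm_num) (by linarith)
    simp only [SimpleGraph.edgeSet_bot, Set.ncard_empty, Nat.cast_zero, mul_zero, zero_div]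
    positivity
  · have : Ws.length ≤ 30 * Fintype.card V := hW2.trans hlen
    exact_mod_cast this
  · rintro e ⟨he, -⟩ f - hef
    induction e with | _ a b =>
    obtain ⟨Q, hQ, h1, h2⟩ := hsep a b he f hef.symm
    obtain ⟨p, hp, hpe⟩ := hW3 Q hQ (by rintro rfl; simp [PathSep.ed] at h1)
    exact ⟨p, hp, by rwa [hpe], by rwa [hpe]⟩
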